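/- arXiv:hep-th/0110250 — 3 statements merged into one kernel-verified Lean document; each statement's English description precedes it below -/
import Mathlib

section
/- Let I ⊆ ℝ be an open interval, let h₄ : I → ℝ be continuously differentiable and strictly positive, let F : I → ℝ satisfy F' = √h₄ on I, and let c₁, c₂ be real constants with c₂ ≠ 0 and c₁ + c₂F(v) > 0 for all v ∈ I. Define h₅ = (c₁ + c₂F)². Then h₅ satisfies β := h₅'' − h₅'·(log √(h₄h₅))' = 0 on I, where ' denotes d/dv. (This is the formula √h₅ = h₅[1] + h₅[2]·∫√h₄ dv for the general solution of the equation S⁴₄ = 0 when h₄' ≠ 0.) -/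
/-! With `u = c₁ + c₂ F` and `h₅ = u²`, the identity `F' = √h₄` gives
`h₅' = 2 c₂ u √h₄ = ± 2 c₂ √(h₄ h₅)`, where the sign is that of `u` and hence locally constant.
So near each point `h₅' = k g` with `k` constant and `g = √(h₄ h₅)`, and then
`h₅'' = k g' = (k g) (g' / g) = h₅' (log g)'`. -/

open Filter Topology

/-- The quantity `β = h₅'' − h₅' (log √(h₄ h₅))'` whose vanishing is the vacuum equation `S⁴₄ = 0`;
the holonomic coordinates are parameters and do not appear. -/
noncomputable def vacuumBeta (h₄ h₅ : ℝ → ℝ) (v : ℝ) : ℝ :=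
  deriv (deriv h₅) v - deriv h₅ v * deriv (fun t => Real.log (√(h₄ t * h₅ t))) v

theorem deriv_deriv_eq_deriv_mul_deriv_log {f g : ℝ → ℝ} {k v : ℝ}
    (hf : deriv f =ᶠ[𝓝 v] fun t => k * g t) (hg : DifferentiableAt ℝ g v) (hgv : g v ≠ 0) :
    deriv (deriv f) v = deriv f v * deriv (fun t => Real.log (g t)) v :=
  calc
    deriv (deriv f) v = k * deriv g v := by rw [hf.deriv_eq, deriv_const_mul k hg]
    _ = k * g v * (deriv g v / g v) := by field_simp
    _ = deriv f v * deriv (fun t => Real.log (g t)) v := by rw [hf.eq_of_nhds, deriv.log hg hgv]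

theorem vacuumBeta_eq_zero_of_deriv_eq_const_mul_sqrt {h₄ h₅ : ℝ → ℝ} {k v : ℝ}
    (hderiv : deriv h₅ =ᶠ[𝓝 v] fun t => k * √(h₄ t * h₅ t))
    (hdiff : DifferentiableAt ℝ (fun t => h₄ t * h₅ t) v) (hpos : 0 < h₄ v * h₅ v) :
    vacuumBeta h₄ h₅ v = 0 :=
  sub_eq_zero.mpr <|
    deriv_deriv_eq_deriv_mul_deriv_log hderiv (hdiff.sqrt hpos.ne') (Real.sqrt_pos.mpr hpos).ne'

theorem eventually_sign_eq_of_continuousAt {X α : Type*} [TopologicalSpace X] [Zero α]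
    [LinearOrder α] [TopologicalSpace α] [OrderTopology α] {u : X → α} {x : X}
    (hu : ContinuousAt u x) (hx : u x ≠ 0) :
    ∀ᶠ y in 𝓝 x, SignType.sign (u y) = SignType.sign (u x) := by
  have hsign : ContinuousAt (fun y => SignType.sign (u y)) x :=
    (continuousAt_sign_of_ne_zero hx).comp hu
  rwa [ContinuousAt, nhds_discrete SignType, tendsto_pure] at hsign

theorem mul_sqrt_eq_sign_mul_sqrt_mul_sq (a u : ℝ) :
    u * √a = SignType.sign u * √(a * u ^ 2) := by
  rw [Real.sqrt_mul' a (sq_nonneg u), Real.sqrt_sq_eq_abs, mul_left_comm, sign_mul_abs, mul_comm]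

theorem hasDerivAt_add_mul_sq_of_sqrt {F : ℝ → ℝ} {a t : ℝ} (c₁ c₂ : ℝ) (hF : HasDerivAt F (√a) t) :
    HasDerivAt (fun s => (c₁ + c₂ * F s) ^ 2)
      (2 * c₂ * SignType.sign (c₁ + c₂ * F t) * √(a * (c₁ + c₂ * F t) ^ 2)) t := by
  refine (((hF.const_mul c₂).const_add c₁).fun_pow 2).congr_deriv ?_
  rw [mul_assoc (2 * c₂), ← mul_sqrt_eq_sign_mul_sqrt_mul_sq]
  push_cast
  ring

theorem sqrt_h5_integral_solves_beta_general {h₄ F : ℝ → ℝ} {c₁ c₂ v : ℝ}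
    (hh₄ : DifferentiableAt ℝ h₄ v) (hh₄pos : 0 < h₄ v)
    (hF : ∀ᶠ t in 𝓝 v, HasDerivAt F (√(h₄ t)) t) (hne : c₁ + c₂ * F v ≠ 0) :
    vacuumBeta h₄ (fun t => (c₁ + c₂ * F t) ^ 2) v = 0 := by
  have hu : DifferentiableAt ℝ (fun t => c₁ + c₂ * F t) v :=
    (hF.self_of_nhds.differentiableAt.const_mul c₂).const_add c₁
  have hderiv : deriv (fun t => (c₁ + c₂ * F t) ^ 2) =ᶠ[𝓝 v] fun t =>
      2 * c₂ * SignType.sign (c₁ + c₂ * F v) * √(h₄ t * (c₁ + c₂ * F t) ^ 2) := by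
    filter_upwards [hF, eventually_sign_eq_of_continuousAt hu.continuousAt hne] with t hFt hsign
    rw [(hasDerivAt_add_mul_sq_of_sqrt c₁ c₂ hFt).deriv, hsign]
  exact vacuumBeta_eq_zero_of_deriv_eq_const_mul_sqrt hderiv (hh₄.mul (hu.pow 2))
    (mul_pos hh₄pos (sq_pos_of_ne_zero hne))

/-- The formula `√h₅ = h₅[1] + h₅[2]·∫ √h₄ dv` gives a solution of the vacuum equation
`S⁴₄ = 0`, i.e. `β = h₅'' − h₅'·(log √(h₄h₅))' = 0`, on an open interval where
`h₄ > 0` and `c₁ + c₂F > 0` with `F' = √h₄`. -/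
theorem sqrt_h5_integral_solves_beta
    (I : Set ℝ) (hIopen : IsOpen I) (hIinterval : I.OrdConnected)
    (h₄ : ℝ → ℝ) (hh₄ : ContDiffOn ℝ 1 h₄ I) (hh₄pos : ∀ v ∈ I, 0 < h₄ v)
    (F : ℝ → ℝ) (hF : ∀ v ∈ I, HasDerivAt F (Real.sqrt (h₄ v)) v)
    (c₁ c₂ : ℝ) (hc₂ : c₂ ≠ 0) (hpos : ∀ v ∈ I, 0 < c₁ + c₂ * F v)
    (h₅ : ℝ → ℝ) (hh₅ : h₅ = fun v => (c₁ + c₂ * F v)^2) :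
    ∀ v ∈ I,
      deriv (deriv h₅) v
        - deriv h₅ v * deriv (fun t => Real.log (Real.sqrt (h₄ t * h₅ t))) v = 0 := by
  subst hh₅
  exact fun v hv => sqrt_h5_integral_solves_beta_general
    ((hh₄.differentiableOn one_ne_zero).differentiableAt (hIopen.mem_nhds hv)) (hh₄pos v hv)
    (eventually_of_mem (hIopen.mem_nhds hv) hF) (hpos v hv).ne'
end

section
/- Let I ⊆ ℝ be an open interval, let h₅ : I → ℝ be twice continuously differentiable with h₅ > 0 and h₅' > 0 on I, and let h₀ ≠ 0 be a real constant. Define h₄ = h₀²·((√h₅)')². Then h₄ > 0 on I and the pair (h₄, h₅) satisfies β := h₅'' − h₅'·(log √(h₄h₅))' = 0 on I, where ' denotes d/dv. (This is the formula √h₄ = h₀·(√h₅)' producing, for a given h₅ with h₅' ≠ 0, a solution h₄ of the equation S⁴₄ = 0.) -/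
/-!
Since `√h₅ · (√h₅)' = h₅' / 2`, the choice `√h₄ = h₀ (√h₅)'` makes `√(h₄ h₅)` equal to
`|h₀ h₅'| / 2`. Hence `log √(h₄ h₅)` has the same derivative as `log |h₅'|`, and multiplying this
logarithmic derivative by `h₅'` gives back the second derivative of `h₅`.
-/

open Filter Set Topology

section Calculus

variable {f : ℝ → ℝ} {x : ℝ}

theorem sq_deriv_sqrt_mul_self (hf : DifferentiableAt ℝ f x) (hx : 0 < f x) :
    deriv (fun t => √(f t)) x ^ 2 * f x = (deriv f x / 2) ^ 2 := by
  have hsqrt : √(f x) ≠ 0 := (Real.sqrt_pos.2 hx).ne'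
  calc deriv (fun t => √(f t)) x ^ 2 * f x
      = (deriv f x / (2 * √(f x)) * √(f x)) ^ 2 := by
        rw [deriv_sqrt hf hx.ne', mul_pow _ √(f x), Real.sq_sqrt hx.le]
    _ = (deriv f x / 2) ^ 2 := by field_simp

theorem deriv_sqrt_ne_zero (hf : DifferentiableAt ℝ f x) (hx : 0 < f x) (hf' : deriv f x ≠ 0) :
    deriv (fun t => √(f t)) x ≠ 0 := by
  rw [deriv_sqrt hf hx.ne']
  exact div_ne_zero hf' (mul_pos two_pos (Real.sqrt_pos.2 hx)).ne'

-- No absolute value is needed on the right because `Real.log y = Real.log |y|`.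
theorem log_sqrt_sq_deriv_sqrt_mul_self (c : ℝ) (hf : DifferentiableAt ℝ f x) (hx : 0 < f x) :
    Real.log √(c ^ 2 * deriv (fun t => √(f t)) x ^ 2 * f x) = Real.log (c / 2 * deriv f x) := by
  have hsq : c ^ 2 * deriv (fun t => √(f t)) x ^ 2 * f x = (c / 2 * deriv f x) ^ 2 := by
    rw [mul_assoc, sq_deriv_sqrt_mul_self hf hx]
    ring
  rw [hsq, Real.sqrt_sq_eq_abs, Real.log_abs]

theorem mul_deriv_log_const_mul {c : ℝ} (hc : c ≠ 0) (hf : DifferentiableAt ℝ f x)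
    (hx : f x ≠ 0) : f x * deriv (fun t => Real.log (c * f t)) x = deriv f x := by
  rw [deriv.log (hf.const_mul c) (mul_ne_zero hc hx), deriv_const_mul c hf,
    mul_div_mul_left _ _ hc, mul_div_cancel₀ _ hx]

end Calculus

theorem h4_from_h5_solves_beta_general {I : Set ℝ} (hI : IsOpen I) {h₄ h₅ : ℝ → ℝ} {h₀ : ℝ}
    (hdiff : DifferentiableOn ℝ h₅ I) (hdiff' : DifferentiableOn ℝ (deriv h₅) I)
    (hpos : ∀ v ∈ I, 0 < h₅ v) (hderiv : ∀ v ∈ I, deriv h₅ v ≠ 0) (hh₀ : h₀ ≠ 0)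
    (hh₄ : EqOn h₄ (fun v => h₀ ^ 2 * deriv (fun t => √(h₅ t)) v ^ 2) I) :
    (∀ v ∈ I, 0 < h₄ v) ∧
    (∀ v ∈ I,
      deriv (deriv h₅) v - deriv h₅ v * deriv (fun t => Real.log √(h₄ t * h₅ t)) v = 0) := by
  have hdiffAt : ∀ v ∈ I, DifferentiableAt ℝ h₅ v :=
    fun v hv => hdiff.differentiableAt (hI.mem_nhds hv)
  refine ⟨fun v hv => ?_, fun v hv => ?_⟩
  · have hsqrt' := deriv_sqrt_ne_zero (hdiffAt v hv) (hpos v hv) (hderiv v hv)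
    rw [hh₄ hv]
    positivity
  · have hlog : (fun t => Real.log √(h₄ t * h₅ t)) =ᶠ[𝓝 v]
        fun t => Real.log (h₀ / 2 * deriv h₅ t) := by
      filter_upwards [hI.mem_nhds hv] with t ht
      rw [hh₄ ht, log_sqrt_sq_deriv_sqrt_mul_self h₀ (hdiffAt t ht) (hpos t ht)]
    rw [hlog.deriv_eq, mul_deriv_log_const_mul (div_ne_zero hh₀ two_ne_zero)
      (hdiff'.differentiableAt (hI.mem_nhds hv)) (hderiv v hv), sub_self]

/-- The formula `√h₄ = h₀·(√h₅)'` produces, for a given `h₅` with `h₅' > 0`, a positive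
solution `h₄ = h₀²·((√h₅)')²` of the vacuum equation `S⁴₄ = 0`, i.e.
`β = h₅'' − h₅'·(log √(h₄h₅))' = 0`. -/
theorem h4_from_h5_solves_beta
    (I : Set ℝ) (hIopen : IsOpen I) (hIinterval : I.OrdConnected)
    (h₅ : ℝ → ℝ) (hh₅ : ContDiffOn ℝ 2 h₅ I)
    (hh₅pos : ∀ v ∈ I, 0 < h₅ v) (hh₅' : ∀ v ∈ I, 0 < deriv h₅ v)
    (h₀ : ℝ) (hh₀ : h₀ ≠ 0)
    (h₄ : ℝ → ℝ)
    (hh₄ : h₄ = fun v => h₀^2 * (deriv (fun t => Real.sqrt (h₅ t)) v)^2) :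
    (∀ v ∈ I, 0 < h₄ v) ∧
    (∀ v ∈ I,
      deriv (deriv h₅) v
        - deriv h₅ v * deriv (fun t => Real.log (Real.sqrt (h₄ t * h₅ t))) v = 0) := by
  exact h4_from_h5_solves_beta_general hIopen (hh₅.differentiableOn two_ne_zero)
    ((hh₅.deriv_of_isOpen (m := 1) hIopen one_add_one_eq_two.le).differentiableOn one_ne_zero)
    hh₅pos (fun v hv => (hh₅' v hv).ne') hh₀ (fun v _ => congrFun hh₄ v)
end

section
/- Let I ⊆ ℝ be an open interval, Λ a real constant, and let h₄, h₅ : I → ℝ be continuously differentiable with h₄ > 0, h₅ > 0, h₅ twice differentiable, and h₅' ≠ 0 on I. Set τ = h₅'/(2h₅), so τ ≠ 0 and τ is differentiable. Then the equation h₅'' − h₅'·(log √(h₄h₅))' = 2Λ·h₄·h₅ holds on I if and only if h₄ satisfies the first-order Bernoulli-type equation h₄' + (2Λ/τ)·h₄² − 2·(τ'/τ + τ)·h₄ = 0 on I (where ' denotes d/dv). -/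
/-!
The function `τ` is half the logarithmic derivative of `h₅`, so `τ' / τ = h₅'' / h₅' - h₅' / h₅`,
while `(log √(h₄ h₅))'` is half the sum of the logarithmic derivatives of `h₄` and `h₅`. Both
equations thus become algebraic relations between `h₄`, `h₄'`, `h₅`, `h₅'`, `h₅''`, and the second
is the first multiplied by the nonzero factor `-2 h₄ / h₅'`.
-/

open Filter Topology

theorem logDeriv_deriv_div_const_mul {𝕜 𝕜' : Type*} [NontriviallyNormedField 𝕜]
    [NontriviallyNormedField 𝕜'] [NormedAlgebra 𝕜 𝕜'] {f : 𝕜 → 𝕜'} {x : 𝕜} {c : 𝕜'} (hc : c ≠ 0)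
    (hfx : f x ≠ 0) (hf'x : deriv f x ≠ 0) (hf' : DifferentiableAt 𝕜 (deriv f) x) :
    logDeriv (fun t => deriv f t / (c * f t)) x = logDeriv (deriv f) x - logDeriv f x := by
  have hf : DifferentiableAt 𝕜 f x := differentiableAt_of_deriv_ne_zero hf'x
  rw [logDeriv_div x hf'x (mul_ne_zero hc hfx) hf' (hf.const_mul c), logDeriv_const_mul x c hc]

theorem deriv_log_sqrt_eq_logDeriv_div_two {f : ℝ → ℝ} {x : ℝ} (hf : DifferentiableAt ℝ f x)
    (hfx : 0 < f x) : deriv (fun t => Real.log (Real.sqrt (f t))) x = logDeriv f x / 2 := by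
  have log_sqrt_eq : (fun t => Real.log (Real.sqrt (f t))) =ᶠ[𝓝 x] fun t => Real.log (f t) / 2 :=
    (hf.continuousAt.eventually_const_lt hfx).mono fun t ht => Real.log_sqrt ht.le
  rw [log_sqrt_eq.deriv_eq, deriv_div_const, deriv.log hf hfx.ne', logDeriv_apply]

theorem deriv_log_sqrt_mul {f g : ℝ → ℝ} {x : ℝ} (hf : DifferentiableAt ℝ f x)
    (hg : DifferentiableAt ℝ g x) (hfg : 0 < f x * g x) :
    deriv (fun t => Real.log (Real.sqrt (f t * g t))) x = (logDeriv f x + logDeriv g x) / 2 := by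
  rw [deriv_log_sqrt_eq_logDeriv_div_two (hf.fun_mul hg) hfg,
    logDeriv_mul x (left_ne_zero_of_mul hfg.ne') (right_ne_zero_of_mul hfg.ne') hf hg]

/-- To be read with `a = h₄`, `b = h₅`, `p = h₅'` and `q = h₅''`, so that `τ = p / (2 * b)`. -/
theorem bernoulli_eq_mul_ricci {K : Type*} [Field K] [NeZero (2 : K)] {a b p : K} (ha : a ≠ 0)
    (hb : b ≠ 0) (hp : p ≠ 0) (a' q Λ : K) :
    a' + 2 * Λ / (p / (2 * b)) * a ^ 2 - 2 * (q / p - p / b + p / (2 * b)) * a =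
      -(2 * a / p) * (q - p * ((a' / a + p / b) / 2) - 2 * Λ * a * b) := by
  have h2 : (2 : K) ≠ 0 := two_ne_zero
  field_simp
  ring

theorem ricci2_lambda_iff_bernoulli_general {h₄ h₅ τ : ℝ → ℝ} {v : ℝ} (Λ : ℝ)
    (hh₄ : DifferentiableAt ℝ h₄ v) (hh₅ : DifferentiableAt ℝ (deriv h₅) v)
    (hpos : 0 < h₄ v * h₅ v) (hh₅' : deriv h₅ v ≠ 0)
    (hτ : τ = fun v => deriv h₅ v / (2 * h₅ v)) :
    τ v ≠ 0 ∧ DifferentiableAt ℝ τ v ∧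
    (deriv (deriv h₅) v - deriv h₅ v * deriv (fun t => Real.log (Real.sqrt (h₄ t * h₅ t))) v
        = 2 * Λ * h₄ v * h₅ v
      ↔ deriv h₄ v + (2 * Λ / τ v) * (h₄ v) ^ 2
          - 2 * (deriv τ v / τ v + τ v) * h₄ v = 0) := by
  have h₄_ne : h₄ v ≠ 0 := left_ne_zero_of_mul hpos.ne'
  have h₅_ne : h₅ v ≠ 0 := right_ne_zero_of_mul hpos.ne'
  have h₅_diff : DifferentiableAt ℝ h₅ v := differentiableAt_of_deriv_ne_zero hh₅'
  have logDeriv_τ : deriv τ v / τ v = deriv (deriv h₅) v / deriv h₅ v - deriv h₅ v / h₅ v := by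
    rw [hτ]
    exact logDeriv_deriv_div_const_mul two_ne_zero h₅_ne hh₅' hh₅
  have factor_ne : -(2 * h₄ v / deriv h₅ v) ≠ 0 :=
    neg_ne_zero.2 (div_ne_zero (mul_ne_zero two_ne_zero h₄_ne) hh₅')
  refine ⟨?_, ?_, ?_⟩
  · rw [hτ]
    exact div_ne_zero hh₅' (mul_ne_zero two_ne_zero h₅_ne)
  · rw [hτ]
    exact hh₅.fun_div (h₅_diff.const_mul 2) (mul_ne_zero two_ne_zero h₅_ne)
  · rw [deriv_log_sqrt_mul hh₄ h₅_diff hpos, logDeriv_apply, logDeriv_apply, logDeriv_τ, hτ,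
      bernoulli_eq_mul_ricci h₄_ne h₅_ne hh₅', mul_eq_zero, or_iff_right factor_ne, sub_eq_zero]

/-- The equation `S⁴₄ = S⁵₅ = −Λ`, i.e. `h₅'' − h₅'·(log √(h₄h₅))' = 2Λh₄h₅`, holds iff
`h₄` satisfies the Bernoulli-type equation `h₄' + (2Λ/τ)h₄² − 2(τ'/τ + τ)h₄ = 0`,
where `τ = h₅'/(2h₅)`; moreover `τ ≠ 0` and `τ` is differentiable on the interval. -/
theorem ricci2_lambda_iff_bernoulli
    (I : Set ℝ) (hIopen : IsOpen I) (hIinterval : I.OrdConnected) (Λ : ℝ)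
    (h₄ h₅ : ℝ → ℝ)
    (hh₄ : ContDiffOn ℝ 1 h₄ I) (hh₅ : ContDiffOn ℝ 2 h₅ I)
    (hh₄pos : ∀ v ∈ I, 0 < h₄ v) (hh₅pos : ∀ v ∈ I, 0 < h₅ v)
    (hh₅' : ∀ v ∈ I, deriv h₅ v ≠ 0)
    (τ : ℝ → ℝ) (hτ : τ = fun v => deriv h₅ v / (2 * h₅ v)) :
    (∀ v ∈ I, τ v ≠ 0) ∧ (∀ v ∈ I, DifferentiableAt ℝ τ v) ∧
    (∀ v ∈ I,
      (deriv (deriv h₅) v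
          - deriv h₅ v * deriv (fun t => Real.log (Real.sqrt (h₄ t * h₅ t))) v
        = 2 * Λ * h₄ v * h₅ v)
      ↔ (deriv h₄ v + (2 * Λ / τ v) * (h₄ v)^2
          - 2 * (deriv τ v / τ v + τ v) * h₄ v = 0)) := by
  have hdh₅ : ContDiffOn ℝ 1 (deriv h₅) I := hh₅.deriv_of_isOpen hIopen (by norm_num)
  have pointwise := fun v (hv : v ∈ I) => ricci2_lambda_iff_bernoulli_general Λ
    ((hh₄.differentiableOn one_ne_zero).differentiableAt (hIopen.mem_nhds hv))
    ((hdh₅.differentiableOn one_ne_zero).differentiableAt (hIopen.mem_nhds hv))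
    (mul_pos (hh₄pos v hv) (hh₅pos v hv)) (hh₅' v hv) hτ
  exact ⟨fun v hv => (pointwise v hv).1, fun v hv => (pointwise v hv).2.1,
    fun v hv => (pointwise v hv).2.2⟩
end
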